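/- Under Assumptions 1, 2 and 3, suppose in addition there is a constant x̄ ≥ ‖x*‖_v such that ‖x(t)‖_v ≤ x̄ almost surely for all t, and let the step size be α_t = h/(t + t0) with t0 ≥ max(4h, τ) and h ≥ 2/(σ(1−γ)). Then for every T ≥ τ and every δ ∈ (0,1), with probability at least 1 − δ, ‖x(T) − x*‖_v ≤ (12 ε̄/(1−γ)) · √((τ+1)h/σ) · √(log(2(τ+1)T²n/δ)/(T + t0)) + (4/(1−γ)) · max(16 ε̄ h τ/σ, 2x̄(τ + t0)) · 1/(T + t0), where ε̄ = 2x̄ + C + w̄/v̲. -/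

import Mathlib

/-! The proof follows the normalized errors `(x t i - xstar i) / v i`. In the update of coordinate
`i`, the indicator that `i` is visited is replaced by its conditional probability given the
information available `τ` steps earlier. This probability is at least `sg` and drives the
contraction. The difference, paired with the residual of the iterate `τ` steps earlier, joins `w` in
a noise which is centred given that information; comparing the two iterates costs only
`O(1 / (t + t0) ^ 2)` per step.

The accumulated noise is discounted at random rates, so it is not a sum to which Azuma's inequality
applies. But a discounted sum is at most the one with the smallest rates restarted at the last time
the former was nonpositive. The discounts are then deterministic and it suffices to bound the
resulting sums for all coordinates, starting times and final times. Each splits along the residue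
classes modulo `τ + 1` into sums of variables that are centred given their predecessors.

Finally, what remains of the error after subtracting the noise stays below `√γ` times a slowly
decreasing envelope `G` plus a term of order `1 / (t + t0)`: the map contracts by `γ = √γ * √γ`, and
the surplus factor `√γ` pays for the decrease of `G`. -/

open MeasureTheory Finset

/-- Weighted infinity norm `‖x‖_v = max_i |x_i| / v_i`. -/
noncomputable def vnorm {n : ℕ} (v x : Fin n → ℝ) : ℝ := ⨆ i, |x i| / v i

/-! ### Discounted sums -/

/-- The solution at time `t` of the recursion `z (k + 1) = (1 - p k) * z k + u k` started from `0`
at time `s`. For `t ≤ s` it is `0`. -/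
def discountedSum (p u : ℕ → ℝ) (s t : ℕ) : ℝ :=
  ∑ k ∈ Ico s t, (∏ l ∈ Ico (k + 1) t, (1 - p l)) * u k

section DiscountedSum

variable {p q u b : ℕ → ℝ} {s t : ℕ}

lemma discountedSum_eq_zero (p u : ℕ → ℝ) (hts : t ≤ s) : discountedSum p u s t = 0 := by
  simp [discountedSum, Ico_eq_empty_of_le hts]

lemma discountedSum_succ (p u : ℕ → ℝ) (hst : s ≤ t) :
    discountedSum p u s (t + 1) = (1 - p t) * discountedSum p u s t + u t := by
  have hprod : ∀ k ∈ Ico s t, (∏ l ∈ Ico (k + 1) (t + 1), (1 - p l)) * u k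
      = (1 - p t) * ((∏ l ∈ Ico (k + 1) t, (1 - p l)) * u k) := fun k hk => by
    rw [prod_Ico_succ_top (mem_Ico.mp hk).2]
    ring
  simp only [discountedSum]
  rw [sum_Ico_succ_top hst, Ico_self, prod_empty, one_mul, sum_congr rfl hprod, mul_sum]

lemma discountedSum_neg (p u : ℕ → ℝ) (s t : ℕ) :
    discountedSum p (-u) s t = -discountedSum p u s t := by
  simp [discountedSum]

lemma discountedSum_le_of_supersolution (hp : ∀ k, s ≤ k → p k ≤ 1) (hb : ∀ k, 0 ≤ b k)
    (hstep : ∀ k, s ≤ k → (1 - p k) * b k + u k ≤ b (k + 1)) :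
    discountedSum p u s t ≤ b t := by
  rcases le_total t s with hts | hst
  · exact (discountedSum_eq_zero p u hts).trans_le (hb t)
  induction t, hst using Nat.le_induction with
  | base => exact (discountedSum_eq_zero p u le_rfl).trans_le (hb s)
  | succ t hst ih =>
    rw [discountedSum_succ p u hst]
    have := mul_le_mul_of_nonneg_left ih (sub_nonneg.mpr (hp t hst))
    linarith [hstep t hst]

/-- While the sum is nonnegative, a smaller discount rate only increases it; when it is nonpositive,
restarting from `0` increases it. So `k₀` can be taken to be the last time at which the sum is
nonpositive. -/
lemma exists_discountedSum_le (hqp : ∀ k, s ≤ k → q k ≤ p k) (hp : ∀ k, s ≤ k → p k ≤ 1)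
    (hst : s ≤ t) : ∃ k₀ ∈ Icc s t, discountedSum p u s t ≤ discountedSum q u k₀ t := by
  induction t, hst using Nat.le_induction with
  | base => exact ⟨s, by simp, by simp only [discountedSum_eq_zero _ _ le_rfl, le_refl]⟩
  | succ t hst ih =>
    obtain ⟨k₀, hk₀, hle⟩ := ih
    obtain ⟨hsk₀, hk₀t⟩ := mem_Icc.mp hk₀
    have hpt := sub_nonneg.mpr (hp t hst)
    have hqt := sub_le_sub_left (hqp t hst) 1
    rw [discountedSum_succ p u hst]
    rcases le_total (discountedSum p u s t) 0 with hneg | hpos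
    · refine ⟨t, mem_Icc.mpr ⟨hst, t.le_succ⟩, ?_⟩
      rw [discountedSum_succ q u le_rfl, discountedSum_eq_zero q u le_rfl]
      linarith [mul_nonpos_of_nonneg_of_nonpos hpt hneg]
    · refine ⟨k₀, mem_Icc.mpr ⟨hsk₀, by omega⟩, ?_⟩
      rw [discountedSum_succ q u hk₀t]
      gcongr
      exact hpt.trans hqt

lemma abs_discountedSum_le (hqp : ∀ k, s ≤ k → q k ≤ p k) (hp : ∀ k, s ≤ k → p k ≤ 1)
    (hst : s ≤ t) {a : ℝ} (ha : 0 ≤ a) (hq : ∀ k₀ ∈ Ico s t, |discountedSum q u k₀ t| ≤ a) :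
    |discountedSum p u s t| ≤ a := by
  have hq' : ∀ k₀ ∈ Icc s t, |discountedSum q u k₀ t| ≤ a := fun k₀ hk₀ => by
    rcases (mem_Icc.mp hk₀).2.eq_or_lt with rfl | hlt
    · rwa [discountedSum_eq_zero q u le_rfl, abs_zero]
    · exact hq k₀ (mem_Ico.mpr ⟨(mem_Icc.mp hk₀).1, hlt⟩)
  refine abs_le'.mpr ⟨?_, ?_⟩
  · obtain ⟨k₀, hk₀, hle⟩ := exists_discountedSum_le (u := u) hqp hp hst
    exact hle.trans ((le_abs_self _).trans (hq' k₀ hk₀))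
  · obtain ⟨k₀, hk₀, hle⟩ := exists_discountedSum_le (u := -u) hqp hp hst
    rw [discountedSum_neg, discountedSum_neg] at hle
    exact hle.trans ((neg_le_abs _).trans (hq' k₀ hk₀))

end DiscountedSum

/-! ### Rates of decay -/

lemma div_step_le_div_add_one {ρ M Φ m : ℝ} (hm : 0 < m) (hM : 0 ≤ M) (hΦ : Φ ≤ (ρ - 1) * M) :
    (1 - ρ / m) * (M / m) + Φ / m ^ 2 ≤ M / (m + 1) :=
  calc (1 - ρ / m) * (M / m) + Φ / m ^ 2 = ((m - ρ) * M + Φ) / m ^ 2 := by field_simp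
    _ ≤ (m - 1) * M / m ^ 2 := by
        gcongr
        linarith
    _ ≤ M / (m + 1) := by
        rw [div_le_div_iff₀ (by positivity) (by positivity)]
        nlinarith

lemma one_sub_inv_mul_div_sqrt_le {K m : ℝ} (hm : 0 < m) (hK : 0 ≤ K) :
    (1 - 1 / m) * (K / √m) ≤ K / √(m + 1) := by
  have hm1 : 0 < m + 1 := by linarith
  have hratio : 1 - 1 / m ≤ √m / √(m + 1) :=
    calc 1 - 1 / m ≤ m / (m + 1) := by
          rw [one_sub_div hm.ne', div_le_div_iff₀ hm hm1]
          linarith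
      _ ≤ √(m / (m + 1)) :=
          Real.le_sqrt_of_sq_le (pow_le_of_le_one (by positivity)
            ((div_le_one hm1).mpr (by linarith)) two_ne_zero)
      _ = √m / √(m + 1) := Real.sqrt_div hm.le _
  calc (1 - 1 / m) * (K / √m) ≤ √m / √(m + 1) * (K / √m) := by gcongr
    _ = K / √(m + 1) := by field_simp

/-- The profile `K / √m + M / m` of the error at (shifted) time `m`: `K` measures the noise, and `M`
the initial error and the lag. -/
noncomputable def errorRate (K M m : ℝ) : ℝ := K / √m + M / m

section ErrorRate

variable {K M m : ℝ}

lemma errorRate_nonneg (hK : 0 ≤ K) (hM : 0 ≤ M) (hm : 0 ≤ m) : 0 ≤ errorRate K M m := by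
  unfold errorRate
  positivity

lemma one_sub_inv_mul_errorRate_le (hK : 0 ≤ K) (hM : 0 ≤ M) (hm : 0 < m) :
    (1 - 1 / m) * errorRate K M m ≤ errorRate K M (m + 1) := by
  have hdiv := div_step_le_div_add_one (ρ := 1) (Φ := 0) hm hM (by simp)
  rw [zero_div, add_zero] at hdiv
  rw [errorRate, mul_add]
  exact add_le_add (one_sub_inv_mul_div_sqrt_le hm hK) hdiv

end ErrorRate

/-- The contraction turns `G` into `s ^ 2 * G` while the envelope only asks for `s * G`; the surplus
`1 - s` pays for the decrease from `G` to `G'`. -/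
lemma envelope_step {s ρ m p G G' M Φ : ℝ} (hs0 : 0 ≤ s) (hs1 : s ≤ 1) (hρ : 1 ≤ ρ * (1 - s))
    (hm : 0 < m) (hp : ρ / m ≤ p) (hG : 0 ≤ G) (hG' : (1 - 1 / m) * G ≤ G') (hM : 0 ≤ M)
    (hΦ : Φ ≤ (ρ - 1) * M) :
    (1 - p) * (s * G + M / m) + p * (s ^ 2 * G) + Φ / m ^ 2 ≤ s * G' + M / (m + 1) := by
  have hgap : 1 / m ≤ p * (1 - s) :=
    calc 1 / m ≤ ρ * (1 - s) / m := by gcongr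
      _ = ρ / m * (1 - s) := by ring
      _ ≤ p * (1 - s) := mul_le_mul_of_nonneg_right hp (by linarith)
  have hcontract : (1 - p) * (s * G) + p * (s ^ 2 * G) ≤ s * G' :=
    calc (1 - p) * (s * G) + p * (s ^ 2 * G) = s * ((1 - p * (1 - s)) * G) := by ring
      _ ≤ s * ((1 - 1 / m) * G) := by gcongr
      _ ≤ s * G' := by gcongr
  have hlag : (1 - p) * (M / m) + Φ / m ^ 2 ≤ M / (m + 1) :=
    calc (1 - p) * (M / m) + Φ / m ^ 2 ≤ (1 - ρ / m) * (M / m) + Φ / m ^ 2 := by gcongr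
      _ ≤ M / (m + 1) := div_step_le_div_add_one hm hM hΦ
  linarith

lemma abs_le_of_envelope {γ ρ m p G G' M Φ r f φ : ℝ} (hγ0 : 0 ≤ γ) (hγ1 : γ ≤ 1)
    (hρ : 1 ≤ ρ * (1 - √γ)) (hm : 0 < m) (hp : ρ / m ≤ p) (hp0 : 0 ≤ p) (hp1 : p ≤ 1) (hG : 0 ≤ G)
    (hG' : (1 - 1 / m) * G ≤ G') (hM : 0 ≤ M) (hΦ : Φ ≤ (ρ - 1) * M)
    (hr : |r| ≤ √γ * G + M / m) (hf : |f| ≤ γ * G) (hφ : |φ| ≤ Φ / m ^ 2) :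
    |(1 - p) * r + p * f + φ| ≤ √γ * G' + M / (m + 1) := by
  have h1p : 0 ≤ 1 - p := sub_nonneg.mpr hp1
  calc |(1 - p) * r + p * f + φ| ≤ (1 - p) * |r| + p * |f| + |φ| := by
        refine (abs_add_three _ _ _).trans_eq ?_
        rw [abs_mul, abs_mul, abs_of_nonneg h1p, abs_of_nonneg hp0]
    _ ≤ (1 - p) * (√γ * G + M / m) + p * (√γ ^ 2 * G) + Φ / m ^ 2 := by
        rw [Real.sq_sqrt hγ0]
        gcongr
    _ ≤ √γ * G' + M / (m + 1) :=
        envelope_step (Real.sqrt_nonneg γ) (Real.sqrt_le_one.mpr hγ1) hρ hm hp hG hG' hM hΦ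

/-- Subtracting the accumulated noise leaves a remainder that stays below
`√γ * G t + M / (t + t0)`, where `G t = errorRate K M (t + t0) / (1 - √γ)`; adding the noise
`K / √(t + t0)` back gives exactly `G t`. -/
theorem abs_le_errorRate_of_recursion {ι : Type*} {y p f u φ : ℕ → ι → ℝ}
    {γ ρ t0 K M Φ : ℝ} {τ T : ℕ} (hγ0 : 0 ≤ γ) (hγ1 : γ < 1) (hρ : 1 ≤ ρ * (1 - √γ))
    (ht0 : 0 < t0) (hK : 0 ≤ K) (hM : 0 ≤ M) (hΦ : Φ ≤ (ρ - 1) * M)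
    (hp : ∀ t, τ ≤ t → ∀ i, ρ / (t + t0) ≤ p t i) (hp0 : ∀ t, τ ≤ t → ∀ i, 0 ≤ p t i)
    (hp1 : ∀ t, τ ≤ t → ∀ i, p t i ≤ 1)
    (hy : ∀ t, τ ≤ t → ∀ i, y (t + 1) i = (1 - p t i) * y t i + p t i * f t i + u t i + φ t i)
    (hf : ∀ t a, (∀ j, |y t j| ≤ a) → ∀ i, |f t i| ≤ γ * a)
    (hφ : ∀ t, τ ≤ t → ∀ i, |φ t i| ≤ Φ / (t + t0) ^ 2)
    (hnoise : ∀ t, τ ≤ t → t ≤ T → ∀ i,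
      |discountedSum (p · i) (u · i) τ t| ≤ K / √(t + t0))
    (hinit : ∀ i, |y τ i| ≤ M / (τ + t0)) (hτT : τ ≤ T) (i : ι) :
    |y T i| ≤ errorRate K M (T + t0) / (1 - √γ) := by
  have hs1 : 0 < 1 - √γ := by rw [sub_pos, Real.sqrt_lt' one_pos]; simpa using hγ1
  set z : ℕ → ι → ℝ := fun t i => discountedSum (p · i) (u · i) τ t with hz
  set G : ℕ → ℝ := fun t => errorRate K M (t + t0) / (1 - √γ) with hG
  have hG0 (t : ℕ) : 0 ≤ G t := div_nonneg (errorRate_nonneg hK hM (by positivity)) hs1.le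
  have hGsplit (t : ℕ) : √γ * G t + M / (t + t0) + K / √(t + t0) = G t := by
    simp only [hG, errorRate]
    field_simp
    ring
  have hGsucc (t : ℕ) : (1 - 1 / (t + t0)) * G t ≤ G (t + 1) := by
    have hrate := one_sub_inv_mul_errorRate_le hK hM (show 0 < (t : ℝ) + t0 by positivity)
    simp only [hG, Nat.cast_add, Nat.cast_one, add_right_comm (t : ℝ) 1 t0, ← mul_div_assoc]
    gcongr
  have total {t : ℕ} (hτt : τ ≤ t) (htT : t ≤ T)
      (hr : ∀ i, |y t i - z t i| ≤ √γ * G t + M / (t + t0)) (i : ι) : |y t i| ≤ G t :=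
    calc |y t i| ≤ |y t i - z t i| + |z t i| := by simpa using abs_add_le (y t i - z t i) (z t i)
      _ ≤ √γ * G t + M / (t + t0) + K / √(t + t0) := add_le_add (hr i) (hnoise t hτt htT i)
      _ = G t := hGsplit t
  have remainder {t : ℕ} (hτt : τ ≤ t) (htT : t ≤ T) (i : ι) :
      |y t i - z t i| ≤ √γ * G t + M / (t + t0) := by
    induction t, hτt using Nat.le_induction generalizing i with
    | base =>
      simp only [hz, discountedSum_eq_zero _ _ le_rfl, sub_zero]
      linarith [hinit i, mul_nonneg (Real.sqrt_nonneg γ) (hG0 τ)]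
    | succ t hτt ih =>
      have hr := ih (by omega)
      have hrec : y (t + 1) i - z (t + 1) i
          = (1 - p t i) * (y t i - z t i) + p t i * f t i + φ t i := by
        simp only [hz, discountedSum_succ _ _ hτt, hy t hτt i]
        ring
      have hcast : ((t + 1 : ℕ) : ℝ) + t0 = t + t0 + 1 := by push_cast; ring
      rw [hrec, hcast]
      exact abs_le_of_envelope hγ0 hγ1.le hρ (by positivity) (hp t hτt i) (hp0 t hτt i)
        (hp1 t hτt i) (hG0 t) (hGsucc t) hM hΦ (hr i) (hf t _ (total hτt (by omega) hr) i)
        (hφ t hτt i)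
  exact total hτT le_rfl (remainder hτT le_rfl) i

lemma one_sub_le_two_mul_one_sub_sqrt {γ : ℝ} (hγ0 : 0 ≤ γ) (hγ1 : γ ≤ 1) :
    1 - γ ≤ 2 * (1 - √γ) := by
  nlinarith [Real.sq_sqrt hγ0, Real.sqrt_nonneg γ, Real.sqrt_le_one.mpr hγ1]

lemma errorRate_div_one_sub_sqrt_le {γ K M m : ℝ} (hγ0 : 0 ≤ γ) (hγ1 : γ < 1) (hK : 0 ≤ K)
    (hM : 0 ≤ M) (hm : 0 ≤ m) :
    errorRate K M m / (1 - √γ) ≤ 2 / (1 - γ) * errorRate K M m := by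
  have h1γ : 0 < 1 - γ := sub_pos.mpr hγ1
  have hgap := one_sub_le_two_mul_one_sub_sqrt hγ0 hγ1.le
  rw [div_mul_eq_mul_div, div_le_div_iff₀ (by linarith) h1γ]
  nlinarith [errorRate_nonneg hK hM hm]

lemma errorRate_two_mul_sqrt_mul_sqrt_div_le {γ ε a L M m : ℝ} (hγ0 : 0 ≤ γ) (hγ1 : γ < 1)
    (hε : 0 ≤ ε) (hL : 0 ≤ L) (hM : 0 ≤ M) (hm : 0 ≤ m) :
    errorRate (2 * ε * √a * √L) M m / (1 - √γ)
      ≤ 12 * ε / (1 - γ) * √a * √(L / m) + 4 / (1 - γ) * M * (1 / m) := by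
  have : 0 ≤ 1 - γ := sub_nonneg.mpr hγ1.le
  refine (errorRate_div_one_sub_sqrt_le hγ0 hγ1 (by positivity) hM hm).trans ?_
  calc 2 / (1 - γ) * errorRate (2 * ε * √a * √L) M m
      = 4 * (ε / (1 - γ) * √a * √(L / m)) + 2 * (1 / (1 - γ) * M * (1 / m)) := by
        rw [errorRate, Real.sqrt_div hL]
        ring
    _ ≤ 12 * (ε / (1 - γ) * √a * √(L / m)) + 4 * (1 / (1 - γ) * M * (1 / m)) := by
        gcongr <;> norm_num
    _ = 12 * ε / (1 - γ) * √a * √(L / m) + 4 / (1 - γ) * M * (1 / m) := by ring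

lemma sq_le_sub_one_mul_two_mul_div {sg h : ℝ} (hsg : 0 < sg) (h0 : 0 ≤ h) (hsgh : 2 ≤ sg * h) :
    h ^ 2 ≤ (sg * h - 1) * (2 * h / sg) :=
  calc h ^ 2 = sg * h / 2 * (2 * h / sg) := by field_simp
    _ ≤ (sg * h - 1) * (2 * h / sg) := by
        gcongr
        linarith

lemma four_mul_le_sub_one_mul {sg h ε τ M : ℝ} (hsg : 0 < sg) (h0 : 0 ≤ h) (hsgh : 2 ≤ sg * h)
    (hε : 0 ≤ ε) (hτ : 0 ≤ τ) (hM : 16 * ε * h * τ / sg ≤ M) :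
    4 * τ * h ^ 2 * ε ≤ (sg * h - 1) * M :=
  calc 4 * τ * h ^ 2 * ε ≤ 8 * τ * h ^ 2 * ε := by
        gcongr
        norm_num
    _ = sg * h / 2 * (16 * ε * h * τ / sg) := by
        field_simp
        ring
    _ ≤ (sg * h - 1) * M := by
        gcongr
        · linarith
        · linarith

/-! ### Concentration of lagged martingale differences -/

section Subgaussian

open ProbabilityTheory
open scoped NNReal

variable {Ω : Type*} {m m0 : MeasurableSpace Ω} {μ : Measure Ω} {S Y : Ω → ℝ} {b c : ℝ≥0}

lemma hasSubgaussianMGF_of_le {c' : ℝ≥0} (hY : HasSubgaussianMGF Y c μ) (hc : c ≤ c') :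
    HasSubgaussianMGF Y c' μ where
  integrable_exp_mul := hY.integrable_exp_mul
  mgf_le t := (hY.mgf_le t).trans (by gcongr)

lemma hasSubgaussianMGF_finset_sum [IsProbabilityMeasure μ] {ι : Type*} {Y : ι → Ω → ℝ}
    {c : ι → ℝ≥0} (s : Finset ι) (hY : ∀ i ∈ s, HasSubgaussianMGF (Y i) (c i) μ) :
    HasSubgaussianMGF (fun ω => ∑ i ∈ s, Y i ω) (#s * ∑ i ∈ s, c i) μ := by
  classical
  have hsqrt : HasSubgaussianMGF (fun ω => ∑ i ∈ s, Y i ω) ((∑ i ∈ s, (c i).sqrt) ^ 2) μ := by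
    induction s using Finset.induction_on with
    | empty => simp
    | insert i s his ih =>
      simp only [sum_insert his]
      simpa only [NNReal.sqrt_sq] using
        (hY i (mem_insert_self i s)).add (ih fun j hj => hY j (mem_insert_of_mem hj))
  refine hasSubgaussianMGF_of_le hsqrt ?_
  simpa only [NNReal.sq_sqrt] using sq_sum_le_card_mul_sum_sq (s := s) (f := fun i => (c i).sqrt)

lemma condExp_mul_eq_zero_of_condExp_eq_zero {m' : MeasurableSpace Ω} {g : Ω → ℝ} (hm' : m' ≤ m)
    (hm : m ≤ m0) [SigmaFinite (μ.trim hm)] (hg : StronglyMeasurable[m] g)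
    (hgY : Integrable (g * Y) μ) (hY : Integrable Y μ) (hY0 : μ[Y | m] =ᵐ[μ] 0) :
    μ[g * Y | m'] =ᵐ[μ] 0 := by
  have hgY0 : μ[g * Y | m] =ᵐ[μ] 0 :=
    (condExp_mul_of_stronglyMeasurable_left hg hgY hY).trans
      (hY0.mono fun ω hω => mul_eq_zero_of_right _ hω)
  calc μ[g * Y | m'] =ᵐ[μ] μ[μ[g * Y | m] | m'] := (condExp_condExp_of_le hm' hm).symm
    _ =ᵐ[μ] μ[0 | m'] := condExp_congr_ae hgY0
    _ = 0 := condExp_zero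

lemma integral_eq_zero_of_condExp_eq_zero (hm : m ≤ m0) [SigmaFinite (μ.trim hm)]
    (hY0 : μ[Y | m] =ᵐ[μ] 0) : ∫ ω, Y ω ∂μ = 0 :=
  (integral_condExp hm).symm.trans (integral_eq_zero_of_ae hY0)

lemma hasSubgaussianMGF_of_abs_le [IsProbabilityMeasure μ] (hY : AEMeasurable Y μ)
    (hYb : ∀ᵐ ω ∂μ, |Y ω| ≤ b) (hY0 : ∫ ω, Y ω ∂μ = 0) : HasSubgaussianMGF Y (b ^ 2) μ := by
  have hc : (‖(b : ℝ) - -b‖₊ / 2) ^ 2 = b ^ 2 := by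
    rw [sub_neg_eq_add, ← two_mul]
    simp
  simpa only [hc] using
    hasSubgaussianMGF_of_mem_Icc_of_integral_eq_zero hY (hYb.mono fun ω => abs_le.mp) hY0

/-- Under the measure tilted by `exp (t * S)`, the variable `Y` still has mean zero, so Hoeffding's
lemma applies to it there. -/
lemma hasSubgaussianMGF_add_of_condExp_eq_zero [IsProbabilityMeasure μ] (hm : m ≤ m0)
    (hS : StronglyMeasurable[m] S) (hSc : HasSubgaussianMGF S c μ) (hY : AEStronglyMeasurable Y μ)
    (hYb : ∀ᵐ ω ∂μ, |Y ω| ≤ b) (hY0 : μ[Y | m] =ᵐ[μ] 0) :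
    HasSubgaussianMGF (fun ω => S ω + Y ω) (c + b ^ 2) μ where
  integrable_exp_mul t := by
    have hY0' := integral_eq_zero_of_condExp_eq_zero hm hY0
    exact (hSc.add (hasSubgaussianMGF_of_abs_le hY.aemeasurable hYb hY0')).integrable_exp_mul t
  mgf_le t := by
    have hexp := hSc.integrable_exp_mul t
    have hν := isProbabilityMeasure_tilted hexp
    have hac : μ.tilted (t * S ·) ≪ μ := tilted_absolutelyContinuous μ _
    have hYint : Integrable Y μ := .of_bound hY b hYb
    have hmean : ∫ ω, Y ω ∂μ.tilted (t * S ·) = 0 := by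
      rw [integral_tilted_mul_eq_mgf]
      refine integral_eq_zero_of_condExp_eq_zero hm
        (condExp_mul_eq_zero_of_condExp_eq_zero le_rfl hm ?_ ?_ hYint hY0)
      · exact ((hS.measurable.const_mul t).exp.div_const _).stronglyMeasurable
      · exact (hexp.div_const _).mul_bdd hY hYb
    have hmgfY := (hasSubgaussianMGF_of_abs_le (hY.mono_ac hac).aemeasurable
      (hac.ae_le hYb) hmean).mgf_le t
    have hmgf : mgf (fun ω => S ω + Y ω) μ t = mgf Y (μ.tilted (t * S ·)) t * mgf S μ t := by
      simp only [mgf]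
      rw [integral_exp_tilted, div_mul_cancel₀ _ (integral_exp_pos hexp).ne']
      simp only [Pi.add_apply, mul_add]
    calc mgf (fun ω => S ω + Y ω) μ t = mgf Y (μ.tilted (t * S ·)) t * mgf S μ t := hmgf
      _ ≤ Real.exp ((b ^ 2 : ℝ≥0) * t ^ 2 / 2) * Real.exp (c * t ^ 2 / 2) :=
          mul_le_mul hmgfY (hSc.mgf_le t) mgf_nonneg (Real.exp_pos _).le
      _ = Real.exp ((c + b ^ 2 : ℝ≥0) * t ^ 2 / 2) := by
          rw [← Real.exp_add]
          push_cast
          ring_nf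

lemma measureReal_le_abs_le [IsProbabilityMeasure μ] {s V : ℝ} (hs : 0 ≤ s)
    (hY : HasSubgaussianMGF Y c μ) (hV : c ≤ V) :
    μ.real {ω | s ≤ |Y ω|} ≤ 2 * Real.exp (-s ^ 2 / (2 * V)) := by
  have hV' := Real.coe_toNNReal V (c.coe_nonneg.trans hV)
  have hY' := hasSubgaussianMGF_of_le hY (NNReal.coe_le_coe.mp (hV.trans_eq hV'.symm))
  have hpos := hY'.measure_ge_le hs
  have hneg := hY'.neg.measure_ge_le hs
  rw [hV'] at hpos hneg
  have hsub : {ω | s ≤ |Y ω|} ⊆ {ω | s ≤ Y ω} ∪ {ω | s ≤ (-Y) ω} := fun ω => (le_abs (b := Y ω)).mp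
  linarith [(measureReal_mono (μ := μ) hsub).trans (measureReal_union_le _ _)]

end Subgaussian

/-- A process adapted to `ℱ` with a delay of one step, bounded by the numbers `c k`, and centred
given the information available `τ` steps earlier. As `k - τ` is truncated, `Y k` is centred given
`ℱ 0` for `k < τ`. -/
structure IsLaggedMartingaleDifference {Ω : Type*} {m0 : MeasurableSpace Ω} (μ : Measure Ω)
    (ℱ : Filtration ℕ m0) (τ : ℕ) (Y : ℕ → Ω → ℝ) (c : ℕ → NNReal) : Prop where
  stronglyMeasurable : ∀ k, StronglyMeasurable[ℱ (k + 1)] (Y k)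
  ae_abs_le : ∀ k, ∀ᵐ ω ∂μ, |Y k ω| ≤ c k
  condExp_eq_zero : ∀ k, μ[Y k | ℱ (k - τ)] =ᵐ[μ] 0

namespace IsLaggedMartingaleDifference

open ProbabilityTheory
open scoped NNReal

variable {Ω : Type*} {m0 : MeasurableSpace Ω} {μ : Measure Ω} {ℱ : Filtration ℕ m0} {τ : ℕ}
  {Y : ℕ → Ω → ℝ} {c : ℕ → ℝ≥0}

lemma const_mul (hY : IsLaggedMartingaleDifference μ ℱ τ Y c) (a : ℕ → ℝ) :
    IsLaggedMartingaleDifference μ ℱ τ (fun k ω => a k * Y k ω) (fun k => ‖a k‖₊ * c k) where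
  stronglyMeasurable k := (hY.stronglyMeasurable k).const_mul (a k)
  ae_abs_le k := (hY.ae_abs_le k).mono fun ω hω => by
    rw [abs_mul, NNReal.coe_mul, coe_nnnorm, Real.norm_eq_abs]
    gcongr
  condExp_eq_zero k := (condExp_smul (a k) (Y k) _).trans
    ((hY.condExp_eq_zero k).mono fun ω hω => mul_eq_zero_of_right _ hω)

lemma stronglyMeasurable_sum (hY : IsLaggedMartingaleDifference μ ℱ τ Y c) (s : Finset ℕ) {t : ℕ}
    (hs : ∀ k ∈ s, k < t) : StronglyMeasurable[ℱ t] (fun ω => ∑ k ∈ s, Y k ω) :=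
  Finset.stronglyMeasurable_fun_sum s fun k hk => (hY.stronglyMeasurable k).mono (ℱ.mono (hs k hk))

lemma hasSubgaussianMGF_sum_of_separated [IsProbabilityMeasure μ]
    (hY : IsLaggedMartingaleDifference μ ℱ τ Y c) (s : Finset ℕ)
    (hs : ∀ j ∈ s, ∀ k ∈ s, j < k → j + τ < k) :
    HasSubgaussianMGF (fun ω => ∑ k ∈ s, Y k ω) (∑ k ∈ s, c k ^ 2) μ := by
  induction s using Finset.induction_on_max with
  | empty => simp
  | insert k s hmax ih =>
    have hks : k ∉ s := fun hk => (hmax k hk).false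
    have hpast : ∀ j ∈ s, j < k - τ := fun j hj =>
      Nat.lt_sub_of_add_lt (hs j (mem_insert_of_mem hj) k (mem_insert_self k s) (hmax j hj))
    have hsum := ih fun i hi j hj => hs i (mem_insert_of_mem hi) j (mem_insert_of_mem hj)
    have hadd := hasSubgaussianMGF_add_of_condExp_eq_zero (ℱ.le (k - τ))
      (hY.stronglyMeasurable_sum s hpast) hsum
      ((hY.stronglyMeasurable k).mono (ℱ.le (k + 1))).aestronglyMeasurable
      (hY.ae_abs_le k) (hY.condExp_eq_zero k)
    simpa only [sum_insert hks, add_comm] using hadd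

/-- The indices in a fixed residue class modulo `τ + 1` are separated. -/
lemma hasSubgaussianMGF_sum [IsProbabilityMeasure μ]
    (hY : IsLaggedMartingaleDifference μ ℱ τ Y c) (s : Finset ℕ) :
    HasSubgaussianMGF (fun ω => ∑ k ∈ s, Y k ω) ((τ + 1) * ∑ k ∈ s, c k ^ 2) μ := by
  have hmod : ∀ k ∈ s, k % (τ + 1) ∈ range (τ + 1) := fun k _ =>
    mem_range.mpr (Nat.mod_lt k τ.succ_pos)
  have hclass : ∀ r ∈ range (τ + 1), HasSubgaussianMGF
      (fun ω => ∑ k ∈ s with k % (τ + 1) = r, Y k ω)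
      (∑ k ∈ s with k % (τ + 1) = r, c k ^ 2) μ := fun r _ => by
    refine hY.hasSubgaussianMGF_sum_of_separated _ fun j hj k hk hjk => ?_
    have hjk' : j ≡ k [MOD τ + 1] := (mem_filter.mp hj).2.trans (mem_filter.mp hk).2.symm
    exact Nat.lt_of_lt_of_le (by omega) (hjk'.add_le_of_lt hjk)
  have hsum := hasSubgaussianMGF_finset_sum (range (τ + 1)) hclass
  simpa only [sum_fiberwise_of_maps_to hmod, card_range, Nat.cast_add, Nat.cast_one] using hsum

lemma measureReal_le_abs_sum_le [IsProbabilityMeasure μ]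
    (hY : IsLaggedMartingaleDifference μ ℱ τ Y c) (A : Finset ℕ) {s V : ℝ} (hs : 0 ≤ s)
    (hV : ((τ : ℝ) + 1) * ∑ k ∈ A, (c k : ℝ) ^ 2 ≤ V) :
    μ.real {ω | s ≤ |∑ k ∈ A, Y k ω|} ≤ 2 * Real.exp (-s ^ 2 / (2 * V)) :=
  measureReal_le_abs_le hs (hY.hasSubgaussianMGF_sum A) (by exact_mod_cast hV)

lemma measureReal_le_abs_discountedSum_le [IsProbabilityMeasure μ] {c : ℝ≥0}
    (hY : IsLaggedMartingaleDifference μ ℱ τ Y fun _ => c) {p : ℕ → ℝ} (hp0 : ∀ k, 0 ≤ p k)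
    (hp1 : ∀ k, p k ≤ 1) (α : ℕ → ℝ) (k₀ t : ℕ) {s V : ℝ} (hs : 0 ≤ s)
    (hV : ((τ : ℝ) + 1) * c ^ 2 * discountedSum p (fun k => α k ^ 2) k₀ t ≤ V) :
    μ.real {ω | s ≤ |discountedSum p (fun k => α k * Y k ω) k₀ t|}
      ≤ 2 * Real.exp (-s ^ 2 / (2 * V)) := by
  let a : ℕ → ℝ := fun k => ∏ l ∈ Ico (k + 1) t, (1 - p l)
  have ha0 : ∀ k, 0 ≤ a k := fun k => prod_nonneg fun l _ => sub_nonneg.mpr (hp1 l)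
  have ha1 : ∀ k, a k ≤ 1 := fun k =>
    prod_le_one (fun l _ => sub_nonneg.mpr (hp1 l)) fun l _ => sub_le_self 1 (hp0 l)
  have hweights : ∑ k ∈ Ico k₀ t, ((‖a k * α k‖₊ * c : ℝ≥0) : ℝ) ^ 2
      ≤ c ^ 2 * discountedSum p (fun k => α k ^ 2) k₀ t := by
    rw [discountedSum, mul_sum]
    refine sum_le_sum fun k _ => ?_
    calc ((‖a k * α k‖₊ * c : ℝ≥0) : ℝ) ^ 2 = c ^ 2 * (a k ^ 2 * α k ^ 2) := by
          rw [NNReal.coe_mul, mul_pow, coe_nnnorm, Real.norm_eq_abs, sq_abs]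
          ring
      _ ≤ c ^ 2 * (a k * α k ^ 2) := by
          gcongr
          exact pow_le_of_le_one (ha0 k) (ha1 k) two_ne_zero
  simp only [discountedSum, ← mul_assoc]
  refine (hY.const_mul fun k => a k * α k).measureReal_le_abs_sum_le _ hs (le_trans ?_ hV)
  rw [mul_assoc]
  gcongr

end IsLaggedMartingaleDifference

lemma discountedSum_sq_le {ρ h M t0 : ℝ} (ht0 : 0 < t0) (hρ : ρ ≤ t0) (hM : 0 ≤ M)
    (hh : h ^ 2 ≤ (ρ - 1) * M) (s t : ℕ) :
    discountedSum (fun k => ρ / (k + t0)) (fun k => (h / (k + t0)) ^ 2) s t ≤ M / (t + t0) := by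
  refine discountedSum_le_of_supersolution (b := fun k : ℕ => M / (k + t0)) (fun k _ => ?_)
    (fun k => by positivity) fun k _ => ?_
  · exact (div_le_one (by positivity)).mpr (by linarith [k.cast_nonneg (α := ℝ)])
  · have hstep := div_step_le_div_add_one (m := k + t0) (by positivity) hM hh
    rw [div_pow]
    exact hstep.trans_eq (by push_cast; ring)

section UnionBound

open scoped NNReal

variable {Ω : Type*} {m0 : MeasurableSpace Ω} {μ : Measure Ω} [IsProbabilityMeasure μ]
  {ℱ : Filtration ℕ m0} {τ : ℕ} {c : ℝ≥0} {ρ h M t0 K L : ℝ}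

lemma IsLaggedMartingaleDifference.measureReal_div_sqrt_le_abs_discountedSum_le {Y : ℕ → Ω → ℝ}
    (hY : IsLaggedMartingaleDifference μ ℱ τ Y fun _ => c) (hc : 0 < c) (ht0 : 0 < t0)
    (hρ0 : 0 ≤ ρ) (hρ : ρ ≤ t0) (hM : 0 < M) (hh : h ^ 2 ≤ (ρ - 1) * M) (hK : 0 ≤ K)
    (hKL : K ^ 2 = 2 * ((τ + 1) * c ^ 2 * M) * L) (k₀ t : ℕ) :
    μ.real {ω | K / √(t + t0) ≤
        |discountedSum (fun k => ρ / (k + t0)) (fun k => h / (k + t0) * Y k ω) k₀ t|}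
      ≤ 2 * Real.exp (-L) := by
  have hm : 0 < t + t0 := by positivity
  have hV : ((τ : ℝ) + 1) * c ^ 2 *
      discountedSum (fun k => ρ / (k + t0)) (fun k => (h / (k + t0)) ^ 2) k₀ t
        ≤ (τ + 1) * c ^ 2 * (M / (t + t0)) := by
    gcongr
    exact discountedSum_sq_le ht0 hρ hM.le hh k₀ t
  have htail := hY.measureReal_le_abs_discountedSum_le (fun k => by positivity)
    (fun k => (div_le_one (by positivity)).mpr (by linarith [k.cast_nonneg (α := ℝ)]))
    (fun k => h / (k + t0)) k₀ t (s := K / √(t + t0)) (by positivity) hV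
  refine htail.trans_eq ?_
  rw [div_pow, Real.sq_sqrt hm.le, hKL]
  congr 2
  field_simp

lemma measureReal_exists_div_sqrt_le_abs_discountedSum_le {ι : Type*} [Fintype ι]
    {Y : ι → ℕ → Ω → ℝ} (hY : ∀ i, IsLaggedMartingaleDifference μ ℱ τ (Y i) fun _ => c)
    (hc : 0 < c) (ht0 : 0 < t0) (hρ0 : 0 ≤ ρ) (hρ : ρ ≤ t0) (hM : 0 < M)
    (hh : h ^ 2 ≤ (ρ - 1) * M) (hK : 0 ≤ K) (hKL : K ^ 2 = 2 * ((τ + 1) * c ^ 2 * M) * L)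
    (T : ℕ) :
    μ.real {ω | ∃ i, ∃ k₀ t : ℕ, k₀ < t ∧ t ≤ T ∧ K / √(t + t0) ≤
        |discountedSum (fun k => ρ / (k + t0)) (fun k => h / (k + t0) * Y i k ω) k₀ t|}
      ≤ Fintype.card ι * T ^ 2 * (2 * Real.exp (-L)) := by
  let A : Finset (ι × ℕ × ℕ) := univ ×ˢ range T ×ˢ Ioc 0 T
  let bad : ι × ℕ × ℕ → Set Ω := fun a => {ω | K / √(a.2.2 + t0) ≤
    |discountedSum (fun k => ρ / (k + t0)) (fun k => h / (k + t0) * Y a.1 k ω) a.2.1 a.2.2|}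
  have hcard : (#A : ℝ) = Fintype.card ι * T ^ 2 := by
    simp [A, card_product, sq]
  calc _ ≤ μ.real (⋃ a ∈ A, bad a) := by
        refine measureReal_mono ?_ (measure_ne_top μ _)
        rintro ω ⟨i, k₀, t, hk₀t, htT, hω⟩
        exact Set.mem_biUnion (x := (i, k₀, t)) (by simp [A]; omega) hω
    _ ≤ ∑ a ∈ A, μ.real (bad a) := measureReal_biUnion_finset_le A bad
    _ ≤ ∑ _a ∈ A, 2 * Real.exp (-L) := sum_le_sum fun a _ =>
        (hY a.1).measureReal_div_sqrt_le_abs_discountedSum_le hc ht0 hρ0 hρ hM hh hK hKL _ _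
    _ = Fintype.card ι * T ^ 2 * (2 * Real.exp (-L)) := by
        rw [sum_const, nsmul_eq_mul, hcard]

end UnionBound

/-! ### Trajectories of the scheme -/

section WeightedNorm

variable {n : ℕ} {v x : Fin n → ℝ} {a : ℝ}

lemma vnorm_nonneg (hv : ∀ i, 0 < v i) (x : Fin n → ℝ) : 0 ≤ vnorm v x :=
  Real.iSup_nonneg fun i => div_nonneg (abs_nonneg _) (hv i).le

lemma abs_div_le_vnorm (hv : ∀ i, 0 < v i) (x : Fin n → ℝ) (i : Fin n) :
    |x i / v i| ≤ vnorm v x := by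
  rw [abs_div, abs_of_pos (hv i)]
  exact le_ciSup (f := fun i => |x i| / v i) (Set.finite_range _).bddAbove i

lemma vnorm_le_iff (hv : ∀ i, 0 < v i) (ha : 0 ≤ a) : vnorm v x ≤ a ↔ ∀ i, |x i / v i| ≤ a := by
  refine ⟨fun hx i => (abs_div_le_vnorm hv x i).trans hx, fun hx => Real.iSup_le (fun i => ?_) ha⟩
  simpa only [abs_div, abs_of_pos (hv i)] using hx i

lemma vnorm_sub_le (hv : ∀ i, 0 < v i) (x y : Fin n → ℝ) :
    vnorm v (x - y) ≤ vnorm v x + vnorm v y := by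
  refine (vnorm_le_iff hv (add_nonneg (vnorm_nonneg hv x) (vnorm_nonneg hv y))).mpr fun i => ?_
  rw [Pi.sub_apply, sub_div]
  exact (abs_sub _ _).trans (add_le_add (abs_div_le_vnorm hv x i) (abs_div_le_vnorm hv y i))

lemma vnorm_sub_le_max_div (hv : ∀ i, 0 < v i) {y : Fin n → ℝ} (hx : vnorm v x ≤ a)
    (hy : vnorm v y ≤ a) {m : ℝ} (hm : 0 < m) (b : ℝ) :
    vnorm v (x - y) ≤ max b (2 * a * m) / m := by
  rw [le_div_iff₀ hm]
  refine le_trans ?_ (le_max_right _ _)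
  gcongr
  linarith [vnorm_sub_le hv x y]

lemma vnorm_le_sum_inv_mul_norm (hv : ∀ i, 0 < v i) (x : Fin n → ℝ) :
    vnorm v x ≤ (∑ i, (v i)⁻¹) * ‖x‖ := by
  have hsum : 0 ≤ ∑ i, (v i)⁻¹ := sum_nonneg fun i _ => (inv_pos.mpr (hv i)).le
  refine (vnorm_le_iff hv (by positivity)).mpr fun i => ?_
  rw [abs_div, abs_of_pos (hv i), div_eq_inv_mul]
  gcongr
  · exact single_le_sum (f := fun i => (v i)⁻¹) (fun j _ => (inv_pos.mpr (hv j)).le) (mem_univ i)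
  · exact norm_le_pi_norm x i

lemma continuous_of_vnorm_sub_le (hv : ∀ i, 0 < v i) {F : (Fin n → ℝ) → Fin n → ℝ} {γ : ℝ}
    (hγ0 : 0 ≤ γ) (hcontr : ∀ x y, vnorm v (F x - F y) ≤ γ * vnorm v (x - y)) : Continuous F := by
  refine continuous_pi fun i => (LipschitzWith.of_dist_le'
    (K := v i * (γ * ∑ j, (v j)⁻¹)) fun x y => ?_).continuous
  calc dist (F x i) (F y i) = v i * |(F x - F y) i / v i| := by
        rw [abs_div, abs_of_pos (hv i), mul_div_cancel₀ _ (hv i).ne', Real.dist_eq, Pi.sub_apply]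
    _ ≤ v i * (γ * ((∑ j, (v j)⁻¹) * ‖x - y‖)) := by
        have := (hv i).le
        gcongr
        exact (abs_div_le_vnorm hv _ i).trans ((hcontr x y).trans
          (mul_le_mul_of_nonneg_left (vnorm_le_sum_inv_mul_norm hv _) hγ0))
    _ = v i * (γ * ∑ j, (v j)⁻¹) * dist x y := by
        rw [dist_eq_norm]
        ring

end WeightedNorm

/-- The normalized residual `(F x - x) / v` of the fixed point equation. -/
noncomputable def normalizedResidual {n : ℕ} (v : Fin n → ℝ) (F : (Fin n → ℝ) → Fin n → ℝ)
    (x : Fin n → ℝ) (i : Fin n) : ℝ :=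
  (F x i - x i) / v i

/-- The zero-mean part of a normalized update from `x` whose indicator `J` has conditional
probability `P`, with noise `w`. In the scheme, `x` is the iterate `τ` steps earlier. -/
noncomputable def centeredNoise {n : ℕ} (v : Fin n → ℝ) (F : (Fin n → ℝ) → Fin n → ℝ)
    (x : Fin n → ℝ) (J P w : ℝ) (i : Fin n) : ℝ :=
  (J - P) * normalizedResidual v F x i + J * (w / v i)

section Residual

variable {n : ℕ} {v : Fin n → ℝ} {F : (Fin n → ℝ) → Fin n → ℝ} {γ C xbar wbar : ℝ}

lemma abs_normalizedResidual_le (hv : ∀ i, 0 < v i) (hFbd : ∀ x, vnorm v (F x) ≤ γ * vnorm v x + C)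
    (x : Fin n → ℝ) (i : Fin n) : |normalizedResidual v F x i| ≤ (1 + γ) * vnorm v x + C :=
  calc |normalizedResidual v F x i| ≤ vnorm v (F x - x) := abs_div_le_vnorm hv (F x - x) i
    _ ≤ vnorm v (F x) + vnorm v x := vnorm_sub_le hv _ _
    _ ≤ (1 + γ) * vnorm v x + C := by linarith [hFbd x]

lemma abs_normalizedResidual_sub_le (hv : ∀ i, 0 < v i)
    (hcontr : ∀ x y, vnorm v (F x - F y) ≤ γ * vnorm v (x - y)) (x y : Fin n → ℝ) (i : Fin n) :
    |normalizedResidual v F x i - normalizedResidual v F y i| ≤ (1 + γ) * vnorm v (x - y) := by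
  have hsplit : normalizedResidual v F x i - normalizedResidual v F y i
      = ((F x - F y) - (x - y)) i / v i := by
    simp only [normalizedResidual, Pi.sub_apply]
    ring
  rw [hsplit]
  linarith [abs_div_le_vnorm hv ((F x - F y) - (x - y)) i, vnorm_sub_le hv (F x - F y) (x - y),
    hcontr x y]

lemma abs_normalizedResidual_add_abs_div_le (hv : ∀ i, 0 < v i) (hγ1 : γ ≤ 1)
    (hFbd : ∀ x, vnorm v (F x) ≤ γ * vnorm v x + C) {x : Fin n → ℝ} (hx : vnorm v x ≤ xbar)
    {w : ℝ} (hw : |w| ≤ wbar) (i : Fin n) :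
    |normalizedResidual v F x i| + |w / v i| ≤ 2 * xbar + C + wbar / ⨅ j, v j := by
  have : Nonempty (Fin n) := ⟨i⟩
  have hinf : 0 < ⨅ j, v j := by
    obtain ⟨j, hj⟩ := exists_eq_ciInf_of_finite (f := v)
    exact hj ▸ hv j
  have hres : |normalizedResidual v F x i| ≤ 2 * xbar + C := by
    nlinarith [abs_normalizedResidual_le hv hFbd x i, vnorm_nonneg hv x]
  have hnoise : |w / v i| ≤ wbar / ⨅ j, v j := by
    rw [abs_div, abs_of_pos (hv i)]
    have := (abs_nonneg w).trans hw
    gcongr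
    exact ciInf_le (Set.finite_range v).bddBelow i
  exact add_le_add hres hnoise

lemma two_mul_add_add_div_iInf_pos (hv : ∀ i, 0 < v i) {x : Fin n → ℝ} (hx : vnorm v x ≤ xbar)
    (hC : 0 < C) (hwbar : 0 ≤ wbar) : 0 < 2 * xbar + C + wbar / ⨅ i, v i := by
  have hxbar : 0 ≤ xbar := (vnorm_nonneg hv x).trans hx
  have hnoise : 0 ≤ wbar / ⨅ i, v i := div_nonneg hwbar (Real.iInf_nonneg fun i => (hv i).le)
  positivity

lemma abs_sub_le_one_of_mem_Icc {J P : ℝ} (hJ : J ∈ Set.Icc 0 1) (hP : P ∈ Set.Icc 0 1) :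
    |J - P| ≤ 1 :=
  abs_sub_le_iff.mpr ⟨by linarith [hJ.2, hP.1], by linarith [hJ.1, hP.2]⟩

lemma abs_centeredNoise_le {x : Fin n → ℝ} {J P w ε : ℝ} {i : Fin n} (hJ : J ∈ Set.Icc 0 1)
    (hP : P ∈ Set.Icc 0 1) (hε : |normalizedResidual v F x i| + |w / v i| ≤ ε) :
    |centeredNoise v F x J P w i| ≤ ε := by
  have hJP : |J - P| ≤ 1 := abs_sub_le_one_of_mem_Icc hJ hP
  have hJ1 : |J| ≤ 1 := abs_le.mpr ⟨by linarith [hJ.1], hJ.2⟩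
  calc |centeredNoise v F x J P w i|
      ≤ |J - P| * |normalizedResidual v F x i| + |J| * |w / v i| := by
        rw [← abs_mul, ← abs_mul]
        exact abs_add_le _ _
    _ ≤ 1 * |normalizedResidual v F x i| + 1 * |w / v i| := by gcongr
    _ ≤ ε := by linarith

end Residual

lemma abs_sub_lag_le {a : ℕ → ℝ} {D t0 : ℝ} {τ t : ℕ} (ht0 : 0 < t0) (hτ : τ ≤ t0)
    (ha : ∀ k, |a (k + 1) - a k| ≤ D / (k + t0)) (hτt : τ ≤ t) :
    |a t - a (t - τ)| ≤ 2 * τ * D / (t + t0) := by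
  have hD : 0 ≤ D := by
    have := (abs_nonneg _).trans (ha 0)
    rwa [Nat.cast_zero, zero_add, le_div_iff₀ ht0, zero_mul] at this
  have hrecent : ∀ k ∈ Ico (t - τ) t, D / (k + t0) ≤ 2 * D / (t + t0) := fun k hk => by
    have hk' : (t : ℝ) ≤ k + τ := by exact_mod_cast Nat.sub_le_iff_le_add.mp (mem_Ico.mp hk).1
    rw [div_le_div_iff₀ (by positivity) (by positivity)]
    nlinarith
  calc |a t - a (t - τ)| = |∑ k ∈ Ico (t - τ) t, (a (k + 1) - a k)| := by
        rw [sum_Ico_sub _ (Nat.sub_le t τ)]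
    _ ≤ ∑ k ∈ Ico (t - τ) t, |a (k + 1) - a k| := abs_sum_le_sum_abs _ _
    _ ≤ ∑ _k ∈ Ico (t - τ) t, 2 * D / (t + t0) :=
        sum_le_sum fun k hk => (ha k).trans (hrecent k hk)
    _ = 2 * τ * D / (t + t0) := by
        rw [sum_const, Nat.card_Ico, Nat.sub_sub_self hτt, nsmul_eq_mul]
        ring

section Trajectory

variable {n : ℕ} {v : Fin n → ℝ} {F : (Fin n → ℝ) → Fin n → ℝ} {xstar : Fin n → ℝ}
  {x J P : ℕ → Fin n → ℝ} {α w : ℕ → ℝ} {γ sg ε h t0 K M : ℝ} {τ T : ℕ}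

lemma sub_div_succ_eq
    (hx : ∀ t i, x (t + 1) i = x t i + α t * (J t i * (F (x t) i - x t i + w t)))
    (t : ℕ) (i : Fin n) :
    (x (t + 1) i - x t i) / v i = α t * (J t i * (normalizedResidual v F (x t) i + w t / v i)) := by
  rw [hx, normalizedResidual]
  ring

/-- The indicator `J` is split into its conditional probability `P`, which drives the contraction,
and `J - P`, which is paired with the iterate `τ` steps earlier to make it zero-mean. -/
lemma error_succ_eq
    (hx : ∀ t i, x (t + 1) i = x t i + α t * (J t i * (F (x t) i - x t i + w t)))
    (τ t : ℕ) (i : Fin n) :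
    (x (t + 1) i - xstar i) / v i
      = (1 - α t * P t i) * ((x t i - xstar i) / v i)
        + α t * P t i * ((F (x t) i - xstar i) / v i)
        + α t * centeredNoise v F (x (t - τ)) (J t i) (P t i) (w t) i
        + α t * ((J t i - P t i)
          * (normalizedResidual v F (x t) i - normalizedResidual v F (x (t - τ)) i)) := by
  have hsucc : (x (t + 1) i - xstar i) / v i
      = (x (t + 1) i - x t i) / v i + (x t i - xstar i) / v i := by ring
  have hres : normalizedResidual v F (x t) i
      = (F (x t) i - xstar i) / v i - (x t i - xstar i) / v i := by
    rw [normalizedResidual]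
    ring
  rw [hsucc, sub_div_succ_eq hx, centeredNoise, hres]
  ring

lemma vnorm_sub_lag_le (hv : ∀ i, 0 < v i) (h0 : 0 ≤ h) (hε : 0 ≤ ε) (ht0 : 0 < t0) (hτ : τ ≤ t0)
    (hx : ∀ t i, x (t + 1) i = x t i + h / (t + t0) * (J t i * (F (x t) i - x t i + w t)))
    (hJ : ∀ t i, J t i ∈ Set.Icc 0 1)
    (hxε : ∀ t i, |normalizedResidual v F (x t) i| + |w t / v i| ≤ ε) {t : ℕ} (hτt : τ ≤ t) :
    vnorm v (x t - x (t - τ)) ≤ 2 * τ * (h * ε) / (t + t0) := by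
  refine (vnorm_le_iff hv (by positivity)).mpr fun i => ?_
  rw [Pi.sub_apply, sub_div]
  refine abs_sub_lag_le (a := fun k => x k i / v i) ht0 hτ (fun k => ?_) hτt
  have hJ1 : |J k i| ≤ 1 := abs_le.mpr ⟨by linarith [(hJ k i).1], (hJ k i).2⟩
  calc |x (k + 1) i / v i - x k i / v i|
      = h / (k + t0) * (|J k i| * |normalizedResidual v F (x k) i + w k / v i|) := by
        rw [← sub_div, sub_div_succ_eq (α := fun k => h / (k + t0)) hx, abs_mul, abs_mul,
          abs_of_nonneg (by positivity)]
    _ ≤ h / (k + t0) * (1 * ε) := by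
        gcongr
        exact (abs_add_le _ _).trans (hxε k i)
    _ = h * ε / (k + t0) := by ring

lemma abs_lagError_le (hv : ∀ i, 0 < v i) (hγ1 : γ ≤ 1)
    (hcontr : ∀ x y, vnorm v (F x - F y) ≤ γ * vnorm v (x - y)) {x y : Fin n → ℝ} {J P D : ℝ}
    (hJ : J ∈ Set.Icc 0 1) (hP : P ∈ Set.Icc 0 1) (hxy : vnorm v (x - y) ≤ D) (i : Fin n) :
    |(J - P) * (normalizedResidual v F x i - normalizedResidual v F y i)| ≤ 2 * D := by
  have hres : |normalizedResidual v F x i - normalizedResidual v F y i| ≤ 2 * D := by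
    nlinarith [abs_normalizedResidual_sub_le hv hcontr x y i, vnorm_nonneg hv (x - y)]
  rw [abs_mul]
  exact (mul_le_of_le_one_left (abs_nonneg _) (abs_sub_le_one_of_mem_Icc hJ hP)).trans hres

lemma abs_sub_div_le_of_fixedPoint (hv : ∀ i, 0 < v i) (hγ0 : 0 ≤ γ)
    (hcontr : ∀ x y, vnorm v (F x - F y) ≤ γ * vnorm v (x - y)) (hfix : F xstar = xstar)
    {x : Fin n → ℝ} {a : ℝ} (hx : ∀ j, |(x j - xstar j) / v j| ≤ a) (i : Fin n) :
    |(F x i - xstar i) / v i| ≤ γ * a := by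
  have hxa : vnorm v (x - xstar) ≤ a := (vnorm_le_iff hv ((abs_nonneg _).trans (hx i))).mpr hx
  calc |(F x i - xstar i) / v i| = |(F x - F xstar) i / v i| := by rw [Pi.sub_apply, hfix]
    _ ≤ γ * vnorm v (x - xstar) := (abs_div_le_vnorm hv _ i).trans (hcontr _ _)
    _ ≤ γ * a := mul_le_mul_of_nonneg_left hxa hγ0

theorem vnorm_sub_le_errorRate_of_trajectory (hv : ∀ i, 0 < v i) (hγ0 : 0 ≤ γ) (hγ1 : γ < 1)
    (hcontr : ∀ x y, vnorm v (F x - F y) ≤ γ * vnorm v (x - y)) (hfix : F xstar = xstar)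
    (hx : ∀ t i, x (t + 1) i = x t i + h / (t + t0) * (J t i * (F (x t) i - x t i + w t)))
    (hJ : ∀ t i, J t i ∈ Set.Icc 0 1) (hsg : 0 ≤ sg) (hP : ∀ t, τ ≤ t → ∀ i, P t i ∈ Set.Icc sg 1)
    (hε : 0 ≤ ε) (hxε : ∀ t i, |normalizedResidual v F (x t) i| + |w t / v i| ≤ ε)
    (h0 : 0 ≤ h) (hsgh : 1 ≤ sg * h * (1 - √γ)) (ht0 : 0 < t0) (hht0 : h ≤ t0) (hτt0 : τ ≤ t0)
    (hK : 0 ≤ K) (hM : 0 ≤ M) (hΦ : 4 * τ * h ^ 2 * ε ≤ (sg * h - 1) * M)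
    (hnoise : ∀ i, ∀ k₀ t : ℕ, k₀ < t → t ≤ T →
      |discountedSum (fun k => sg * h / (k + t0)) (fun k => h / (k + t0) *
        centeredNoise v F (x (k - τ)) (J k i) (P k i) (w k) i) k₀ t| ≤ K / √(t + t0))
    (hinit : vnorm v (x τ - xstar) ≤ M / (τ + t0)) (hτT : τ ≤ T) :
    vnorm v (x T - xstar) ≤ errorRate K M (T + t0) / (1 - √γ) := by
  have hsγ : 0 < 1 - √γ := sub_pos.mpr ((Real.sqrt_lt' one_pos).mpr (by linarith))
  have hα1 : ∀ t : ℕ, h / (t + t0) ≤ 1 := fun t =>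
    (div_le_one (by positivity)).mpr (by linarith [t.cast_nonneg (α := ℝ)])
  have hα0 : ∀ t : ℕ, 0 ≤ h / (t + t0) := fun t => by positivity
  have hP0 : ∀ t, τ ≤ t → ∀ i, 0 ≤ P t i := fun t ht i => hsg.trans (hP t ht i).1
  have hαP : ∀ t, τ ≤ t → ∀ i, sg * h / (t + t0) ≤ h / (t + t0) * P t i := fun t ht i => by
    rw [mul_comm sg, mul_div_right_comm]
    exact mul_le_mul_of_nonneg_left (hP t ht i).1 (hα0 t)
  have hαP1 : ∀ t, τ ≤ t → ∀ i, h / (t + t0) * P t i ≤ 1 := fun t ht i =>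
    mul_le_one₀ (hα1 t) (hP0 t ht i) (hP t ht i).2
  have hlag : ∀ t, τ ≤ t → ∀ i, |h / (t + t0) * ((J t i - P t i) *
      (normalizedResidual v F (x t) i - normalizedResidual v F (x (t - τ)) i))|
      ≤ 4 * τ * h ^ 2 * ε / (t + t0) ^ 2 := fun t ht i => by
    rw [abs_mul, abs_of_nonneg (hα0 t)]
    refine (mul_le_mul_of_nonneg_left (abs_lagError_le hv hγ1.le hcontr (hJ t i)
      ⟨hP0 t ht i, (hP t ht i).2⟩ (vnorm_sub_lag_le hv h0 hε ht0 hτt0 hx hJ hxε ht) i)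
      (hα0 t)).trans_eq ?_
    field_simp
    ring
  refine (vnorm_le_iff hv (div_nonneg (errorRate_nonneg hK hM (by positivity)) hsγ.le)).mpr
    fun i => abs_le_errorRate_of_recursion hγ0 hγ1 hsgh ht0 hK hM hΦ hαP
      (fun t ht i => mul_nonneg (hα0 t) (hP0 t ht i)) hαP1
      (y := fun t i => (x t i - xstar i) / v i) (fun t _ i => error_succ_eq hx τ t i)
      (fun _ _ => abs_sub_div_le_of_fixedPoint hv hγ0 hcontr hfix) hlag (fun t ht htT i => ?_)
      (fun i => (abs_div_le_vnorm hv (x τ - xstar) i).trans hinit) hτT i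
  exact abs_discountedSum_le (fun k hk => hαP k hk i) (fun k hk => hαP1 k hk i) ht (by positivity)
    fun k₀ hk₀ => hnoise i k₀ t (mem_Ico.mp hk₀).2 htT

end Trajectory

/-! ### The random iterates -/

section Scheme

variable {Ω : Type*} {m0 : MeasurableSpace Ω} {μ : Measure Ω} {ℱ : Filtration ℕ m0}

lemma condExp_sub_condExp_eq_zero {m : MeasurableSpace Ω} (hm : m ≤ m0) [SigmaFinite (μ.trim hm)]
    {J : Ω → ℝ} (hJ : Integrable J μ) : μ[J - μ[J | m] | m] =ᵐ[μ] 0 :=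
  calc μ[J - μ[J | m] | m] =ᵐ[μ] μ[J | m] - μ[μ[J | m] | m] := condExp_sub hJ integrable_condExp m
    _ = 0 := by
      rw [condExp_of_stronglyMeasurable hm stronglyMeasurable_condExp integrable_condExp, sub_self]

lemma condExp_mem_Icc [IsFiniteMeasure μ] {m : MeasurableSpace Ω} (hm : m ≤ m0) {J : Ω → ℝ}
    {a b : ℝ} (hJ : Integrable J μ) (hJab : ∀ᵐ ω ∂μ, J ω ∈ Set.Icc a b) :
    ∀ᵐ ω ∂μ, (μ[J | m]) ω ∈ Set.Icc a b := by
  have ha := condExp_mono (m := m) (integrable_const a) hJ (hJab.mono fun ω hω => hω.1)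
  have hb := condExp_mono (m := m) hJ (integrable_const b) (hJab.mono fun ω hω => hω.2)
  rw [condExp_const hm] at ha hb
  filter_upwards [ha, hb] with ω h0 h1 using ⟨h0, h1⟩

/-- The indicator of the event that the `t`-th update acts on the coordinate `i`. -/
def visit {Ω ι : Type*} [DecidableEq ι] (idx : ℕ → Ω → ι) (t : ℕ) (i : ι) (ω : Ω) : ℝ :=
  if idx t ω = i then 1 else 0

/-- The conditional probability that the `t`-th update acts on the coordinate `i`, given the
information available `τ` steps earlier. -/
noncomputable def visitProb {ι : Type*} [DecidableEq ι] (μ : Measure Ω) (ℱ : Filtration ℕ m0)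
    (idx : ℕ → Ω → ι) (τ t : ℕ) (i : ι) : Ω → ℝ :=
  μ[visit idx t i | ℱ (t - τ)]

section Visit

variable {ι : Type*} [DecidableEq ι] {idx : ℕ → Ω → ι}

lemma visit_mem_Icc (idx : ℕ → Ω → ι) (t : ℕ) (i : ι) (ω : Ω) :
    visit idx t i ω ∈ Set.Icc (0 : ℝ) 1 := by
  unfold visit
  split_ifs <;> simp

lemma stronglyMeasurable_visit [MeasurableSpace ι] [MeasurableSingletonClass ι]
    {m : MeasurableSpace Ω} {t : ℕ} (hidx : Measurable[m] (idx t)) (i : ι) :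
    StronglyMeasurable[m] (visit idx t i) :=
  .ite (hidx (measurableSet_singleton i)) stronglyMeasurable_const stronglyMeasurable_const

lemma ite_eq_add_mul_visit (idx : ℕ → Ω → ι) (t : ℕ) (i : ι) (ω : Ω) (x a y : ℝ) :
    (if i = idx t ω then x + a * y else x) = x + a * (visit idx t i ω * y) := by
  simp only [visit, eq_comm (a := i)]
  split_ifs <;> ring

lemma integrable_visit [MeasurableSpace ι] [MeasurableSingletonClass ι] [IsFiniteMeasure μ]
    {t : ℕ} (hidx : Measurable (idx t)) (i : ι) : Integrable (visit idx t i) μ :=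
  .of_mem_Icc 0 1 (stronglyMeasurable_visit hidx i).measurable.aemeasurable
    (ae_of_all _ fun ω => visit_mem_Icc idx t i ω)

lemma visitProb_mem_Icc [MeasurableSpace ι] [MeasurableSingletonClass ι] [IsFiniteMeasure μ]
    {t : ℕ} (hidx : Measurable (idx t)) (τ : ℕ) (i : ι) :
    ∀ᵐ ω ∂μ, visitProb μ ℱ idx τ t i ω ∈ Set.Icc (0 : ℝ) 1 :=
  condExp_mem_Icc (ℱ.le _) (integrable_visit hidx i)
    (ae_of_all _ fun ω => visit_mem_Icc idx t i ω)

end Visit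

variable {n : ℕ} {v : Fin n → ℝ} {F : (Fin n → ℝ) → Fin n → ℝ} {idx : ℕ → Ω → Fin n}
  {X : ℕ → Ω → Fin n → ℝ} {w : ℕ → Ω → ℝ} {α : ℕ → ℝ}

lemma measurable_asynchronousUpdate {m : MeasurableSpace Ω} (hF : Continuous F) {Z : Ω → Fin n → ℝ}
    {J : Fin n → Ω → ℝ} {w : Ω → ℝ} (hZ : Measurable[m] Z) (hJ : ∀ i, Measurable[m] (J i))
    (hw : Measurable[m] w) (a : ℝ) :
    Measurable[m] fun ω i => Z ω i + a * (J i ω * (F (Z ω) i - Z ω i + w ω)) := by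
  refine measurable_pi_lambda _ fun i => ?_
  have hZi := measurable_pi_iff.mp hZ i
  have hFZi := measurable_pi_iff.mp (hF.measurable.comp hZ) i
  exact hZi.add (((hJ i).mul ((hFZi.sub hZi).add hw)).const_mul a)

lemma measurable_trajectory (hF : Continuous F) (hidx : ∀ t, Measurable[ℱ t] (idx t))
    (hw : ∀ t, Measurable[ℱ (t + 1)] (w t)) (hX0 : Measurable[ℱ 0] (X 0))
    (hX : ∀ t ω i, X (t + 1) ω i
      = X t ω i + α t * (visit idx t i ω * (F (X t ω) i - X t ω i + w t ω)))
    (t : ℕ) : Measurable[ℱ t] (X t) := by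
  induction t with
  | zero => exact hX0
  | succ t ih =>
    have hle := ℱ.mono t.le_succ
    have hXsucc := funext fun ω => funext (hX t ω)
    rw [hXsucc]
    exact measurable_asynchronousUpdate hF (ih.mono hle le_rfl)
      (fun i => ((stronglyMeasurable_visit (hidx t) i).mono hle).measurable) (hw t) (α t)

lemma stronglyMeasurable_normalizedResidual {m : MeasurableSpace Ω} (hF : Continuous F)
    {Z : Ω → Fin n → ℝ} (hZ : Measurable[m] Z) (i : Fin n) :
    StronglyMeasurable[m] fun ω => normalizedResidual v F (Z ω) i :=
  (((measurable_pi_iff.mp (hF.measurable.comp hZ) i).sub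
    (measurable_pi_iff.mp hZ i)).div_const _).stronglyMeasurable

lemma condExp_centeredNoise_eq_zero [IsFiniteMeasure μ] {m m' : MeasurableSpace Ω} (hm : m ≤ m')
    (hm' : m' ≤ m0) {Z : Ω → Fin n → ℝ} {J w : Ω → ℝ} {i : Fin n}
    (hZ : StronglyMeasurable[m] fun ω => normalizedResidual v F (Z ω) i)
    (hZ_int : Integrable (fun ω => normalizedResidual v F (Z ω) i) μ)
    (hJ : StronglyMeasurable[m'] J) (hJ01 : ∀ ω, J ω ∈ Set.Icc 0 1) (hw_int : Integrable w μ)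
    (hw0 : μ[w | m'] =ᵐ[μ] 0) :
    μ[fun ω => centeredNoise v F (Z ω) (J ω) ((μ[J | m]) ω) (w ω) i | m] =ᵐ[μ] 0 := by
  have hJ_int : Integrable J μ := .of_mem_Icc 0 1 (hJ.mono hm').measurable.aemeasurable
    (ae_of_all _ hJ01)
  have hP := condExp_mem_Icc (hm.trans hm') hJ_int (ae_of_all _ hJ01)
  have hZJ : Integrable ((fun ω => normalizedResidual v F (Z ω) i) * (J - μ[J | m])) μ :=
    hZ_int.mul_bdd (c := 1) (hJ_int.sub integrable_condExp).aestronglyMeasurable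
      (hP.mono fun ω hω => abs_sub_le_one_of_mem_Icc (hJ01 ω) hω)
  have hJw : Integrable ((fun ω => J ω / v i) * w) μ :=
    hw_int.bdd_mul (c := 1 / |v i|) (hJ_int.div_const _).aestronglyMeasurable
      (ae_of_all _ fun ω => by
      rw [norm_div, Real.norm_eq_abs, Real.norm_eq_abs]
      gcongr
      exact abs_le.mpr ⟨by linarith [(hJ01 ω).1], (hJ01 ω).2⟩)
  have hZJ0 := condExp_mul_eq_zero_of_condExp_eq_zero le_rfl (hm.trans hm') hZ hZJ
    (hJ_int.sub integrable_condExp) (condExp_sub_condExp_eq_zero (hm.trans hm') hJ_int)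
  have hJw0 := condExp_mul_eq_zero_of_condExp_eq_zero hm hm'
    (hJ.measurable.div_const (v i)).stronglyMeasurable hJw hw_int hw0
  have hsplit : (fun ω => centeredNoise v F (Z ω) (J ω) ((μ[J | m]) ω) (w ω) i)
      = (fun ω => normalizedResidual v F (Z ω) i) * (J - μ[J | m]) + (fun ω => J ω / v i) * w := by
    ext ω
    simp only [centeredNoise, Pi.add_apply, Pi.mul_apply, Pi.sub_apply]
    ring
  rw [hsplit]
  filter_upwards [condExp_add hZJ hJw m, hZJ0, hJw0] with ω hadd hω hω'
  rw [hadd, Pi.add_apply, hω, hω', Pi.zero_apply, add_zero]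

lemma isLaggedMartingaleDifference_centeredNoise [IsFiniteMeasure μ] {ε : NNReal}
    (hF : Continuous F) (hidx : ∀ t, Measurable[ℱ t] (idx t))
    (hX : ∀ t, Measurable[ℱ t] (X t)) (hw_meas : ∀ t, Measurable[ℱ (t + 1)] (w t))
    (hw_int : ∀ t, Integrable (w t) μ) (hw_mean : ∀ t, μ[w t | ℱ t] =ᵐ[μ] 0)
    (hε : ∀ s t, ∀ᵐ ω ∂μ, ∀ i, |normalizedResidual v F (X s ω) i| + |w t ω / v i| ≤ ε)
    (τ : ℕ) (i : Fin n) :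
    IsLaggedMartingaleDifference μ ℱ τ (fun k ω => centeredNoise v F (X (k - τ) ω)
      (visit idx k i ω) (visitProb μ ℱ idx τ k i ω) (w k ω) i) fun _ => ε := by
  have hres (k : ℕ) := stronglyMeasurable_normalizedResidual (v := v) hF (hX (k - τ)) i
  have hvisit (k : ℕ) := stronglyMeasurable_visit (hidx k) i
  have hlag (k : ℕ) : ℱ (k - τ) ≤ ℱ k := ℱ.mono (Nat.sub_le k τ)
  have hsucc (k : ℕ) : ℱ k ≤ ℱ (k + 1) := ℱ.mono k.le_succ
  refine ⟨fun k => ?_, fun k => ?_, fun k => ?_⟩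
  · have hprob : StronglyMeasurable[ℱ (k - τ)] (visitProb μ ℱ idx τ k i) :=
      stronglyMeasurable_condExp
    exact ((((hvisit k).sub (hprob.mono (hlag k))).mul ((hres k).mono (hlag k))).mono
      (hsucc k)).add (((hvisit k).mono (hsucc k)).mul
        ((hw_meas k).div_const (v i)).stronglyMeasurable)
  · filter_upwards [hε (k - τ) k,
      visitProb_mem_Icc (ℱ := ℱ) ((hidx k).mono (ℱ.le k) le_rfl) τ i] with ω hω hP
    exact abs_centeredNoise_le (visit_mem_Icc idx k i ω) hP (hω i)
  · refine condExp_centeredNoise_eq_zero (hlag k) (ℱ.le k) (hres k) (.of_bound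
      ((hres k).mono (ℱ.le _)).aestronglyMeasurable ε ((hε (k - τ) k).mono fun ω hω => ?_))
      (hvisit k) (visit_mem_Icc idx k i) (hw_int k) (hw_mean k)
    exact (le_add_of_nonneg_right (abs_nonneg _)).trans (hω i)

lemma ofReal_one_sub_le_measure_of_ae_imp [IsProbabilityMeasure μ] {bad good : Set Ω} {δ : ℝ}
    (hbad : μ.real bad ≤ δ) (hgood : ∀ᵐ ω ∂μ, ω ∉ bad → ω ∈ good) :
    ENNReal.ofReal (1 - δ) ≤ μ good := by
  refine ENNReal.ofReal_le_of_le_toReal ?_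
  have hcover : μ.real Set.univ ≤ μ.real (bad ∪ good) := ENNReal.toReal_mono
    (measure_ne_top μ _) (measure_mono_ae (hgood.mono fun ω hω _ => or_iff_not_imp_left.mpr hω))
  rw [probReal_univ] at hcover
  change 1 - δ ≤ μ.real good
  linarith [measureReal_union_le (μ := μ) bad good]

theorem ofReal_one_sub_le_measure_vnorm_sub_le_errorRate [IsProbabilityMeasure μ] {ε : NNReal}
    {xstar : Fin n → ℝ} {γ sg h t0 K M L : ℝ} {τ T : ℕ} (hv : ∀ i, 0 < v i) (hγ0 : 0 ≤ γ)
    (hγ1 : γ < 1) (hcontr : ∀ x y, vnorm v (F x - F y) ≤ γ * vnorm v (x - y))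
    (hfix : F xstar = xstar) (hidx : ∀ t, Measurable[ℱ t] (idx t)) (hX0 : Measurable[ℱ 0] (X 0))
    (hX : ∀ t ω i, X (t + 1) ω i
      = X t ω i + h / (t + t0) * (visit idx t i ω * (F (X t ω) i - X t ω i + w t ω)))
    (hw_meas : ∀ t, Measurable[ℱ (t + 1)] (w t)) (hw_int : ∀ t, Integrable (w t) μ)
    (hw_mean : ∀ t, μ[w t | ℱ t] =ᵐ[μ] 0)
    (hvisit : ∀ i t, τ ≤ t → ∀ᵐ ω ∂μ, sg ≤ visitProb μ ℱ idx τ t i ω) (hε0 : 0 < ε)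
    (hε : ∀ s t, ∀ᵐ ω ∂μ, ∀ i, |normalizedResidual v F (X s ω) i| + |w t ω / v i| ≤ ε)
    (hsg0 : 0 < sg) (hsg1 : sg ≤ 1) (h0 : 0 < h) (hsgγ : 2 ≤ sg * h * (1 - γ))
    (hht0 : h ≤ t0) (hτt0 : τ ≤ t0) (hK : 0 ≤ K)
    (hKL : K ^ 2 = 2 * ((τ + 1) * ε ^ 2 * (2 * h / sg)) * L) (hM : 16 * ε * h * τ / sg ≤ M)
    (hinit : ∀ᵐ ω ∂μ, vnorm v (X τ ω - xstar) ≤ M / (τ + t0)) (hτT : τ ≤ T) :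
    ENNReal.ofReal (1 - n * T ^ 2 * (2 * Real.exp (-L)))
      ≤ μ {ω | vnorm v (X T ω - xstar) ≤ errorRate K M (T + t0) / (1 - √γ)} := by
  have ht0 : 0 < t0 := h0.trans_le hht0
  have hM0 : 0 ≤ M := le_trans (by positivity) hM
  have hsgh : 2 ≤ sg * h := by nlinarith [mul_pos hsg0 h0]
  have hρ : 1 ≤ sg * h * (1 - √γ) := by
    nlinarith [one_sub_le_two_mul_one_sub_sqrt hγ0 hγ1.le, mul_pos hsg0 h0]
  have hF := continuous_of_vnorm_sub_le hv hγ0 hcontr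
  have hbad := measureReal_exists_div_sqrt_le_abs_discountedSum_le
    (isLaggedMartingaleDifference_centeredNoise (v := v) hF hidx
      (measurable_trajectory hF hidx hw_meas hX0 hX) hw_meas hw_int hw_mean hε τ)
    hε0 ht0 (by positivity) ((mul_le_of_le_one_left h0.le hsg1).trans hht0) (by positivity)
    (sq_le_sub_one_mul_two_mul_div hsg0 h0.le hsgh) hK hKL T
  rw [Fintype.card_fin] at hbad
  refine ofReal_one_sub_le_measure_of_ae_imp hbad ?_
  have hvisit' : ∀ᵐ ω ∂μ, ∀ t, τ ≤ t → ∀ i, visitProb μ ℱ idx τ t i ω ∈ Set.Icc sg 1 := by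
    refine ae_all_iff.mpr fun t => ae_all_iff.mpr fun ht => ae_all_iff.mpr fun i => ?_
    filter_upwards [hvisit i t ht,
      visitProb_mem_Icc (ℱ := ℱ) ((hidx t).mono (ℱ.le t) le_rfl) τ i] with ω hω hω1
    exact ⟨hω, hω1.2⟩
  filter_upwards [hvisit', hinit, ae_all_iff.mpr fun t => hε t t] with ω hPω hinitω hεω hω
  push Not at hω
  exact vnorm_sub_le_errorRate_of_trajectory hv hγ0 hγ1 hcontr hfix (fun t => hX t ω)
    (fun t i => visit_mem_Icc idx t i ω) hsg0.le hPω ε.coe_nonneg hεω h0.le hρ ht0 hht0 hτt0 hK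
    hM0 (four_mul_le_sub_one_mul hsg0 h0.le hsgh ε.coe_nonneg τ.cast_nonneg hM)
    (fun i k₀ t hkt htT => (hω i k₀ t hkt htT).le) hinitω hτT

end Scheme

lemma log_two_mul_mul_mul_div_nonneg {τ a b δ : ℝ} (hτ : 0 ≤ τ) (ha : 1 ≤ a) (hb : 1 ≤ b)
    (hδ0 : 0 < δ) (hδ2 : δ ≤ 2) : 0 ≤ Real.log (2 * (τ + 1) * a * b / δ) := by
  refine Real.log_nonneg ((one_le_div hδ0).mpr ?_)
  calc δ ≤ 2 * (0 + 1) * 1 * 1 := by linarith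
    _ ≤ 2 * (τ + 1) * a * b := by gcongr

lemma mul_two_mul_exp_neg_log_le {τ a b δ : ℝ} (hτ : 0 ≤ τ) (ha : 0 < a) (hb : 0 < b)
    (hδ : 0 < δ) : b * a * (2 * Real.exp (-Real.log (2 * (τ + 1) * a * b / δ))) ≤ δ := by
  rw [← Real.log_inv, Real.exp_log (by positivity), inv_div]
  calc b * a * (2 * (δ / (2 * (τ + 1) * a * b))) = δ / (τ + 1) := by field_simp
    _ ≤ δ := div_le_self hδ.le (by linarith)

theorem asynchronous_SA_finite_time_bound_general
    {Ω : Type*} {m0 : MeasurableSpace Ω} (μ : Measure Ω) [IsProbabilityMeasure μ]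
    (ℱ : Filtration ℕ m0) (n : ℕ) (hn : 0 < n) (v : Fin n → ℝ) (hv : ∀ i, 0 < v i)
    (F : (Fin n → ℝ) → (Fin n → ℝ)) (γ C : ℝ) (hγ0 : 0 ≤ γ) (hγ1 : γ < 1) (hC : 0 < C)
    (hcontr : ∀ x y, vnorm v (F x - F y) ≤ γ * vnorm v (x - y))
    (hFbd : ∀ x, vnorm v (F x) ≤ γ * vnorm v x + C)
    (xstar : Fin n → ℝ) (hfix : F xstar = xstar)
    (idx : ℕ → Ω → Fin n) (hidx : ∀ t, Measurable[ℱ t] (idx t)) (w : ℕ → Ω → ℝ) (wbar : ℝ)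
    (X : ℕ → Ω → Fin n → ℝ) (hX0 : Measurable[ℱ 0] (X 0)) (h t0 : ℝ)
    (hupd : ∀ t ω i, X (t + 1) ω i = if i = idx t ω
      then X t ω i + h / (t + t0) * (F (X t ω) i - X t ω i + w t ω) else X t ω i)
    (hw_meas : ∀ t, Measurable[ℱ (t + 1)] (w t)) (hw_mean : ∀ t, μ[w t | ℱ t] =ᵐ[μ] 0)
    (hw_bd : ∀ t, ∀ᵐ ω ∂μ, |w t ω| ≤ wbar)
    (sg : ℝ) (τ : ℕ) (hsg0 : 0 < sg) (hsg1 : sg ≤ 1)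
    (hexpl : ∀ (i : Fin n) (t : ℕ), τ ≤ t →
      ∀ᵐ ω ∂μ, sg ≤ (μ[(fun ω' => if idx t ω' = i then (1 : ℝ) else 0) | ℱ (t - τ)]) ω)
    (xbar : ℝ) (hxbar : vnorm v xstar ≤ xbar) (hXbd : ∀ t, ∀ᵐ ω ∂μ, vnorm v (X t ω) ≤ xbar)
    (hht0 : h ≤ t0) (hτt0 : τ ≤ t0) (hh : 2 / (sg * (1 - γ)) ≤ h)
    (T : ℕ) (hT0 : 0 < T) (hT : τ ≤ T) (δ : ℝ) (hδ0 : 0 < δ) (hδ1 : δ < 1) :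
    ENNReal.ofReal (1 - δ) ≤
      μ {ω | vnorm v (X T ω - xstar) ≤
        (12 * (2 * xbar + C + wbar / ⨅ i, v i) / (1 - γ)) *
          Real.sqrt (((τ : ℝ) + 1) * h / sg) *
          Real.sqrt (Real.log (2 * ((τ : ℝ) + 1) * (T : ℝ) ^ 2 * (n : ℝ) / δ) / ((T : ℝ) + t0)) +
        (4 / (1 - γ)) *
          max (16 * (2 * xbar + C + wbar / ⨅ i, v i) * h * (τ : ℝ) / sg)
            (2 * xbar * ((τ : ℝ) + t0)) * (1 / ((T : ℝ) + t0))} := by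
  have h1γ : 0 < 1 - γ := sub_pos.mpr hγ1
  have h0 : 0 < h := lt_of_lt_of_le (by positivity) hh
  have hsgγ : 2 ≤ sg * h * (1 - γ) := by
    rw [div_le_iff₀ (by positivity)] at hh
    linarith
  have ht0 : 0 < t0 := h0.trans_le hht0
  have hε0 : 0 < 2 * xbar + C + wbar / ⨅ i, v i := by
    obtain ⟨ω, hω⟩ := (hw_bd 0).exists
    exact two_mul_add_add_div_iInf_pos hv hxbar hC ((abs_nonneg _).trans hω)
  lift (2 * xbar + C + wbar / ⨅ i, v i) to NNReal using hε0.le with ε hεdef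
  have hε : ∀ s t, ∀ᵐ ω ∂μ, ∀ i, |normalizedResidual v F (X s ω) i| + |w t ω / v i| ≤ ε := by
    intro s t
    filter_upwards [hXbd s, hw_bd t] with ω hXω hwω i
    rw [hεdef]
    exact abs_normalizedResidual_add_abs_div_le hv hγ1.le hFbd hXω hwω i
  have hw_int : ∀ t, Integrable (w t) μ := fun t =>
    .of_bound ((hw_meas t).mono (ℱ.le _) le_rfl).aestronglyMeasurable wbar (hw_bd t)
  have hn1 : (1 : ℝ) ≤ n := by exact_mod_cast hn
  have hT1 : (1 : ℝ) ≤ T ^ 2 := one_le_pow₀ (by exact_mod_cast hT0)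
  have hL := log_two_mul_mul_mul_div_nonneg τ.cast_nonneg hT1 hn1 hδ0 (by linarith)
  set L : ℝ := Real.log (2 * (τ + 1) * T ^ 2 * n / δ)
  have hKL : (2 * ε * √((τ + 1) * h / sg) * √L) ^ 2
      = 2 * ((τ + 1) * ε ^ 2 * (2 * h / sg)) * L := by
    rw [mul_pow, mul_pow, Real.sq_sqrt hL, Real.sq_sqrt (by positivity)]
    ring
  have hmain := ofReal_one_sub_le_measure_vnorm_sub_le_errorRate hv hγ0 hγ1 hcontr hfix hidx hX0
    (fun t ω i => (hupd t ω i).trans (ite_eq_add_mul_visit idx t i ω _ _ _)) hw_meas hw_int hw_mean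
    hexpl hε0 hε hsg0 hsg1 h0 hsgγ hht0 hτt0 (by positivity) hKL (le_max_left _ _)
    ((hXbd τ).mono fun ω hω => vnorm_sub_le_max_div hv hω hxbar (by positivity) _) hT
  refine (ENNReal.ofReal_le_ofReal (sub_le_sub_left ?_ 1)).trans
    (hmain.trans (measure_mono fun ω hω => ?_))
  · exact mul_two_mul_exp_neg_log_le τ.cast_nonneg (by positivity) (by positivity) hδ0
  · exact le_trans hω.out (errorRate_two_mul_sqrt_mul_sqrt_div_le hγ0 hγ1 ε.coe_nonneg hL
      (by positivity) (by positivity))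

/-- **Theorem 1 (main finite-time bound for asynchronous SA).**
Under the contraction assumption on `F`, the martingale-difference noise assumption on `w`,
the sufficient-exploration assumption on `i_t`, an almost-sure bound `‖x(t)‖_v ≤ x̄`, and the
rescaled linear step size `α_t = h/(t+t₀)` with `t₀ ≥ max(4h, τ)`, `h ≥ 2/(σ(1-γ))`, for every
`T ≥ τ` and `δ ∈ (0,1)`, with probability at least `1 - δ`,
`‖x(T) - x*‖_v ≤ (12ε̄/(1-γ))·√((τ+1)h/σ)·√(log(2(τ+1)T²n/δ)/(T+t₀))
  + (4/(1-γ))·max(16ε̄hτ/σ, 2x̄(τ+t₀))·1/(T+t₀)`, where `ε̄ = 2x̄ + C + w̄/v̲`. -/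
theorem asynchronous_SA_finite_time_bound
    {Ω : Type*} {m0 : MeasurableSpace Ω} (μ : Measure Ω) [IsProbabilityMeasure μ]
    (ℱ : Filtration ℕ m0)
    (n : ℕ) (hn : 0 < n) (v : Fin n → ℝ) (hv : ∀ i, 0 < v i)
    -- Assumption 1 (contraction)
    (F : (Fin n → ℝ) → (Fin n → ℝ)) (γ C : ℝ) (hγ0 : 0 < γ) (hγ1 : γ < 1) (hC : 0 < C)
    (hcontr : ∀ x y, vnorm v (F x - F y) ≤ γ * vnorm v (x - y))
    (hFbd : ∀ x, vnorm v (F x) ≤ γ * vnorm v x + C)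
    (xstar : Fin n → ℝ) (hfix : F xstar = xstar)
    -- the asynchronous SA scheme
    (idx : ℕ → Ω → Fin n) (hidx : ∀ t, Measurable[ℱ t] (idx t))
    (w : ℕ → Ω → ℝ) (wbar : ℝ)
    (α : ℕ → ℝ) (hα : ∀ t, α t ∈ Set.Ioc (0 : ℝ) 1)
    (X : ℕ → Ω → Fin n → ℝ) (hX0 : ∀ ω, X 0 ω = 0)
    (hupd : ∀ t ω i, X (t + 1) ω i =
      if i = idx t ω then X t ω i + α t * (F (X t ω) i - X t ω i + w t ω) else X t ω i)
    -- Assumption 2 (martingale difference noise)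
    (hw_meas : ∀ t, Measurable[ℱ (t + 1)] (w t))
    (hw_mean : ∀ t, μ[w t | ℱ t] =ᵐ[μ] 0)
    (hw_bd : ∀ t, ∀ᵐ ω ∂μ, |w t ω| ≤ wbar)
    -- Assumption 3 (sufficient exploration)
    (sg : ℝ) (τ : ℕ) (hsg0 : 0 < sg) (hsg1 : sg < 1) (hτ : 0 < τ)
    (hexpl : ∀ (i : Fin n) (t : ℕ), τ ≤ t →
      ∀ᵐ ω ∂μ, sg ≤ (μ[(fun ω' => if idx t ω' = i then (1 : ℝ) else 0) | ℱ (t - τ)]) ω)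
    -- almost sure boundedness of the iterates
    (xbar : ℝ) (hxbar : vnorm v xstar ≤ xbar)
    (hXbd : ∀ t, ∀ᵐ ω ∂μ, vnorm v (X t ω) ≤ xbar)
    -- step sizes
    (h t0 : ℝ) (ht0 : max (4 * h) (τ : ℝ) ≤ t0) (hh : 2 / (sg * (1 - γ)) ≤ h)
    (hstep : ∀ t, α t = h / ((t : ℝ) + t0))
    -- horizon and confidence level
    (T : ℕ) (hT : τ ≤ T) (δ : ℝ) (hδ0 : 0 < δ) (hδ1 : δ < 1) :
    ENNReal.ofReal (1 - δ) ≤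
      μ {ω | vnorm v (X T ω - xstar) ≤
        (12 * (2 * xbar + C + wbar / ⨅ i, v i) / (1 - γ)) *
          Real.sqrt (((τ : ℝ) + 1) * h / sg) *
          Real.sqrt (Real.log (2 * ((τ : ℝ) + 1) * (T : ℝ) ^ 2 * (n : ℝ) / δ) / ((T : ℝ) + t0)) +
        (4 / (1 - γ)) *
          max (16 * (2 * xbar + C + wbar / ⨅ i, v i) * h * (τ : ℝ) / sg)
            (2 * xbar * ((τ : ℝ) + t0)) * (1 / ((T : ℝ) + t0))} := by
  have h0 : 0 < h := lt_of_lt_of_le (by have := sub_pos.mpr hγ1; positivity) hh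
  exact asynchronous_SA_finite_time_bound_general μ ℱ n hn v hv F γ C hγ0.le hγ1 hC hcontr hFbd
    xstar hfix idx hidx w wbar X (funext hX0 ▸ measurable_const) h t0
    (fun t ω i => hstep t ▸ hupd t ω i) hw_meas hw_mean hw_bd sg τ hsg0 hsg1.le hexpl xbar hxbar
    hXbd (by linarith [le_of_max_le_left ht0]) (le_of_max_le_right ht0) hh T (hτ.trans_le hT) hT
    δ hδ0 hδ1
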